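/- Let (Ω, 𝓕, μ) be a probability space, A a measurable event with 0 < μ(A) < 1, and Z : Ω → ℝ a random variable such that the conditional distribution of Z given A has Lebesgue density f₁ and the conditional distribution of Z given the complement of A has Lebesgue density f₀, where f₀ and f₁ are continuous, strictly positive, and x ↦ f₁(x)/f₀(x) is strictly increasing. Then the map t ↦ μ(A | Z ≤ t) is strictly increasing on ℝ. In particular, if μ(A | Z ≤ τ₁) = r₁ for some τ₁, then every τ̃₁ < τ₁ satisfies μ(A | Z ≤ τ̃₁) < r₁. -/

import Mathlib

/-!
Write `Fᵢ t = ∫ x in Iic t, fᵢ x`, `p = μ A` and `q = μ Aᶜ`. The posterior probability is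
`p F₁ / (p F₁ + q F₀)`, which is strictly increasing exactly when `F₁ / F₀` is. For `s < t`, the
value `k = f₁ s / f₀ s` of the likelihood ratio at `s` separates the two relevant averages: since
`f₁ ≤ k f₀` on `Iic s` and `f₁ > k f₀` on `(s, t]`, it follows that
`F₁ s / F₀ s ≤ k < (F₁ t - F₁ s) / (F₀ t - F₀ s)`, and hence `F₁ s / F₀ s < F₁ t / F₀ t`.
-/

open MeasureTheory

theorem setIntegral_Iic_pos {f : ℝ → ℝ} (hi : Integrable f) (hp : ∀ x, 0 < f x) (t : ℝ) :
    0 < ∫ x in Set.Iic t, f x := by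
  rw [setIntegral_pos_iff_support_of_nonneg_ae (Filter.Eventually.of_forall fun x => (hp x).le)
    hi.integrableOn]
  have hsupp : Function.support f = Set.univ := Set.eq_univ_of_forall fun x => (hp x).ne'
  simp [hsupp]

/-- The ratio of distribution functions inherits strict monotonicity from the likelihood ratio
(in cross-multiplied form). -/
theorem setIntegral_Iic_mul_lt {f₀ f₁ : ℝ → ℝ} (hc₀ : Continuous f₀) (hc₁ : Continuous f₁)
    (hp₀ : ∀ x, 0 < f₀ x) (hi₀ : Integrable f₀) (hi₁ : Integrable f₁)
    (hmono : StrictMono (fun x => f₁ x / f₀ x)) {s t : ℝ} (hst : s < t) :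
    (∫ x in Set.Iic s, f₁ x) * (∫ x in Set.Iic t, f₀ x) <
      (∫ x in Set.Iic t, f₁ x) * (∫ x in Set.Iic s, f₀ x) := by
  set k := f₁ s / f₀ s with hk
  have hle : ∫ x in Set.Iic s, f₁ x ≤ k * ∫ x in Set.Iic s, f₀ x := by
    rw [← integral_const_mul]
    refine setIntegral_mono_on hi₁.integrableOn (hi₀.const_mul k).integrableOn
      measurableSet_Iic fun x hx => ?_
    exact (div_le_iff₀ (hp₀ x)).1 (hmono.monotone hx)
  have hgt : ∀ x, s < x → k * f₀ x < f₁ x := fun x hx => (lt_div_iff₀ (hp₀ x)).1 (hmono hx)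
  have hlt : k * (∫ x in s..t, f₀ x) < ∫ x in s..t, f₁ x := by
    rw [← intervalIntegral.integral_const_mul]
    exact intervalIntegral.integral_lt_integral_of_continuousOn_of_le_of_exists_lt hst
      (hc₀.const_mul k).continuousOn hc₁.continuousOn (fun x hx => (hgt x hx.1).le)
      ⟨t, Set.right_mem_Icc.2 hst.le, hgt t hst⟩
  have h₀ := intervalIntegral.integral_Iic_sub_Iic (a := s) (b := t) hi₀.integrableOn
    hi₀.integrableOn
  have h₁ := intervalIntegral.integral_Iic_sub_Iic (a := s) (b := t) hi₁.integrableOn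
    hi₁.integrableOn
  have hD₀ : 0 < ∫ x in s..t, f₀ x :=
    intervalIntegral.intervalIntegral_pos_of_pos (hc₀.intervalIntegrable s t) hp₀ hst
  have hF₀ := setIntegral_Iic_pos hi₀ hp₀ s
  rw [sub_eq_iff_eq_add] at h₀ h₁
  rw [h₀, h₁]
  nlinarith [mul_le_mul_of_nonneg_right hle hD₀.le, mul_lt_mul_of_pos_right hlt hF₀]

/-- A function that represents the conditional law of `Z` given a non-null event `B` through
Bochner integrals is integrable: otherwise its integral over `ℝ` would take the junk value `0`,
forcing `μ B = 0`. -/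
theorem integrable_of_density {Ω : Type*} [MeasurableSpace Ω] {μ : Measure Ω} {B : Set Ω}
    (hB : μ B ≠ 0) {Z : Ω → ℝ} {f : ℝ → ℝ}
    (hd : ∀ s : Set ℝ, MeasurableSet s →
      μ (B ∩ Z ⁻¹' s) = μ B * ENNReal.ofReal (∫ x in s, f x)) : Integrable f := by
  by_contra h
  have := hd Set.univ MeasurableSet.univ
  simp [integral_undef h, hB] at this

theorem conditional_prob_on_rays_strict_mono
    {Ω : Type*} [MeasurableSpace Ω] (μ : Measure Ω) [IsProbabilityMeasure μ]
    (A : Set Ω) (hA : MeasurableSet A) (hA₀ : 0 < μ A) (hA₁ : μ A < 1)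
    (Z : Ω → ℝ) (hZ : Measurable Z)
    (f₀ f₁ : ℝ → ℝ)
    (hc₀ : Continuous f₀) (hc₁ : Continuous f₁)
    (hp₀ : ∀ x, 0 < f₀ x) (hp₁ : ∀ x, 0 < f₁ x)
    (hd₁ : ∀ s : Set ℝ, MeasurableSet s →
      μ (A ∩ Z ⁻¹' s) = μ A * ENNReal.ofReal (∫ x in s, f₁ x))
    (hd₀ : ∀ s : Set ℝ, MeasurableSet s →
      μ (Aᶜ ∩ Z ⁻¹' s) = μ Aᶜ * ENNReal.ofReal (∫ x in s, f₀ x))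
    (hSMLRP : StrictMono (fun x => f₁ x / f₀ x)) :
    StrictMono
      (fun t => (μ (A ∩ Z ⁻¹' (Set.Iic t))).toReal / (μ (Z ⁻¹' (Set.Iic t))).toReal) ∧
    ∀ τ₁ r₁ : ℝ,
      (μ (A ∩ Z ⁻¹' (Set.Iic τ₁))).toReal / (μ (Z ⁻¹' (Set.Iic τ₁))).toReal = r₁ →
      ∀ τ₁' : ℝ, τ₁' < τ₁ →
        (μ (A ∩ Z ⁻¹' (Set.Iic τ₁'))).toReal / (μ (Z ⁻¹' (Set.Iic τ₁'))).toReal < r₁ := by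
  have hAc : μ Aᶜ ≠ 0 := by
    rw [Ne, prob_compl_eq_zero_iff hA]
    exact hA₁.ne
  have hi₁ := integrable_of_density hA₀.ne' hd₁
  have hi₀ := integrable_of_density hAc hd₀
  have hp : 0 < (μ A).toReal := ENNReal.toReal_pos hA₀.ne' (measure_ne_top μ A)
  have hq : 0 < (μ Aᶜ).toReal := ENNReal.toReal_pos hAc (measure_ne_top μ Aᶜ)
  have hnum : ∀ t, (μ (A ∩ Z ⁻¹' (Set.Iic t))).toReal =
      (μ A).toReal * ∫ x in Set.Iic t, f₁ x := fun t => by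
    rw [hd₁ _ measurableSet_Iic, ENNReal.toReal_mul,
      ENNReal.toReal_ofReal (setIntegral_Iic_pos hi₁ hp₁ t).le]
  have hden : ∀ t, (μ (Z ⁻¹' (Set.Iic t))).toReal =
      (μ A).toReal * (∫ x in Set.Iic t, f₁ x) + (μ Aᶜ).toReal * ∫ x in Set.Iic t, f₀ x :=
      fun t => by
    rw [← hnum, ← measure_inter_add_sdiff (Z ⁻¹' (Set.Iic t)) hA, Set.sdiff_eq,
      Set.inter_comm _ A, Set.inter_comm _ Aᶜ,
      ENNReal.toReal_add (measure_ne_top _ _) (measure_ne_top _ _),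
      hd₀ _ measurableSet_Iic, ENNReal.toReal_mul,
      ENNReal.toReal_ofReal (setIntegral_Iic_pos hi₀ hp₀ t).le]
  have hmono : StrictMono (fun t =>
      (μ (A ∩ Z ⁻¹' (Set.Iic t))).toReal / (μ (Z ⁻¹' (Set.Iic t))).toReal) := by
    intro s t hst
    have hcross := setIntegral_Iic_mul_lt hc₀ hc₁ hp₀ hi₀ hi₁ hSMLRP hst
    have hpos : ∀ u, 0 < (μ A).toReal * (∫ x in Set.Iic u, f₁ x) +
        (μ Aᶜ).toReal * ∫ x in Set.Iic u, f₀ x := fun u =>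
      add_pos (mul_pos hp (setIntegral_Iic_pos hi₁ hp₁ u))
        (mul_pos hq (setIntegral_Iic_pos hi₀ hp₀ u))
    simp only [hnum, hden]
    rw [div_lt_div_iff₀ (hpos s) (hpos t)]
    nlinarith [mul_lt_mul_of_pos_left hcross (mul_pos hp hq)]
  refine ⟨hmono, ?_⟩
  rintro τ₁ r₁ rfl τ₁' hlt
  exact hmono hlt
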